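/- Let ξ be a unit vector in ℝ², let x ∈ ℝ² be nonzero, and let k > 0. Then (1/(2π)) ∫_{S¹} (θ·ξ) e^{i k θ·x} dθ = i ((x/|x|)·ξ) J₁(k|x|), where the integral is over the unit circle S¹ ⊂ ℝ² parametrized by θ(t) = (cos t, sin t), t ∈ [0, 2π]. -/

import Mathlib

/-!
Write `x = r (cos φ, sin φ)` with `r = |x|`, and put `z = k r`. Substituting `t = u + φ - π/2`
gives `θ·x = r sin u` and `θ·ξ = A sin u - B cos u`, where `A = (x/|x|)·ξ` and `B` is the component
of `ξ` orthogonal to `x`. By periodicity the integral may be taken over `[-π, π]`. There the `B` term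
is the integral of an exact derivative of a periodic function, hence zero (`integral_cos_mul_exp`),
and folding the `A` term about `0` leaves `2 i A ∫₀^π sin u sin (z sin u) du`
(`integral_sin_mul_exp`). The last integral equals `π J₁(z)`, because the other half
`cos u cos (z sin u)` of `cos (u - z sin u)` is again an exact derivative (`besselJ_one`).
-/

open scoped RealInnerProductSpace

/-- Bessel function of the first kind of integer order `n`, via Bessel's integral
`Jₙ(z) = (1/π) ∫₀^π cos(nθ − z sin θ) dθ`. -/
noncomputable def besselJ (n : ℕ) (z : ℝ) : ℝ :=
  (1 / Real.pi) * ∫ θ in (0:ℝ)..Real.pi, Real.cos (n * θ - z * Real.sin θ)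

/-- The point `(cos t, sin t)` of the unit circle in `ℝ²`. -/
noncomputable def circ (t : ℝ) : EuclideanSpace ℝ (Fin 2) :=
  (WithLp.equiv 2 (Fin 2 → ℝ)).symm ![Real.cos t, Real.sin t]

open intervalIntegral

lemma circ_inner (t : ℝ) (y : EuclideanSpace ℝ (Fin 2)) :
    ⟪circ t, y⟫ = Real.cos t * y 0 + Real.sin t * y 1 := by
  simp [circ, PiLp.inner_apply, Fin.sum_univ_two, mul_comm]

lemma besselJ_one {z : ℝ} (hz : z ≠ 0) :
    besselJ 1 z = (1 / Real.pi) *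
      ∫ u in (0:ℝ)..Real.pi, Real.sin u * Real.sin (z * Real.sin u) := by
  have h0 : ∫ u in (0:ℝ)..Real.pi, Real.cos u * Real.cos (z * Real.sin u) = 0 := by
    have hd : ∀ u ∈ Set.uIcc (0:ℝ) Real.pi,
        HasDerivAt (fun u => Real.sin (z * Real.sin u) / z)
          (Real.cos u * Real.cos (z * Real.sin u)) u := by
      intro u _
      have h := (((Real.hasDerivAt_sin u).const_mul z).sin).div_const z
      exact h.congr_deriv (by field_simp)
    rw [integral_eq_sub_of_hasDerivAt hd
      (Continuous.intervalIntegrable (by fun_prop) _ _)]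
    simp
  unfold besselJ
  congr 1
  have e : ∀ u : ℝ, Real.cos ((1 : ℕ) * u - z * Real.sin u) =
      Real.cos u * Real.cos (z * Real.sin u) + Real.sin u * Real.sin (z * Real.sin u) := by
    intro u
    rw [Nat.cast_one, one_mul, Real.cos_sub]
  simp_rw [e]
  rw [integral_add (Continuous.intervalIntegrable (by fun_prop) _ _)
    (Continuous.intervalIntegrable (by fun_prop) _ _), h0, zero_add]

lemma integral_cos_mul_exp {z : ℝ} (hz : z ≠ 0) :
    ∫ u in (-Real.pi)..Real.pi,
      (Real.cos u : ℂ) * Complex.exp (Complex.I * z * (Real.sin u : ℝ)) = 0 := by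
  have hz' : (z : ℂ) ≠ 0 := by exact_mod_cast hz
  have hd : ∀ u ∈ Set.uIcc (-Real.pi) Real.pi,
      HasDerivAt (fun u : ℝ => Complex.exp (Complex.I * z * (Real.sin u : ℝ)) / (Complex.I * z))
        ((Real.cos u : ℂ) * Complex.exp (Complex.I * z * (Real.sin u : ℝ))) u := by
    intro u _
    have h := ((((Real.hasDerivAt_sin u).ofReal_comp).const_mul
      (Complex.I * z)).cexp).div_const (Complex.I * z)
    exact h.congr_deriv (by field_simp [Complex.I_ne_zero])
  rw [integral_eq_sub_of_hasDerivAt hd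
    (Continuous.intervalIntegrable (by fun_prop) _ _)]
  simp

lemma integral_sin_mul_exp (z : ℝ) :
    ∫ u in (-Real.pi)..Real.pi,
      (Real.sin u : ℂ) * Complex.exp (Complex.I * z * (Real.sin u : ℝ)) =
    2 * Complex.I * ((∫ u in (0:ℝ)..Real.pi, Real.sin u * Real.sin (z * Real.sin u) : ℝ) : ℂ) := by
  have hc : Continuous fun u : ℝ =>
      (Real.sin u : ℂ) * Complex.exp (Complex.I * z * (Real.sin u : ℝ)) := by fun_prop
  have hneg := integral_comp_neg (a := 0) (b := Real.pi) fun u : ℝ =>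
      (Real.sin u : ℂ) * Complex.exp (Complex.I * z * (Real.sin u : ℝ))
  rw [neg_zero] at hneg
  rw [← integral_add_adjacent_intervals (hc.intervalIntegrable _ 0) (hc.intervalIntegrable _ _),
    ← hneg, ← integral_add (Continuous.intervalIntegrable (by fun_prop) _ _)
      (hc.intervalIntegrable _ _), ← integral_ofReal, ← integral_const_mul]
  refine integral_congr fun u _ => ?_
  have e1 : Complex.I * z * ((Real.sin u : ℝ) : ℂ) = ((z * Real.sin u : ℝ) : ℂ) * Complex.I := by
    push_cast; ring
  have e2 : Complex.I * z * ((Real.sin (-u) : ℝ) : ℂ) =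
      ((-(z * Real.sin u) : ℝ) : ℂ) * Complex.I := by
    rw [Real.sin_neg]; push_cast; ring
  simp only [e1, e2]
  simp only [Complex.exp_mul_I, ← Complex.ofReal_cos, ← Complex.ofReal_sin, Real.sin_neg,
    Real.cos_neg]
  push_cast
  ring

lemma exists_polar (x : EuclideanSpace ℝ (Fin 2)) :
    ∃ φ : ℝ, x 0 = ‖x‖ * Real.cos φ ∧ x 1 = ‖x‖ * Real.sin φ := by
  have hn : ‖(⟨x 0, x 1⟩ : ℂ)‖ = ‖x‖ := by
    rw [EuclideanSpace.norm_eq, Complex.norm_def, Complex.normSq_mk]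
    simp [Fin.sum_univ_two, sq]
  refine ⟨Complex.arg ⟨x 0, x 1⟩, ?_, ?_⟩
  · rw [← hn, Complex.norm_mul_cos_arg]
  · rw [← hn, Complex.norm_mul_sin_arg]

/-- For a unit vector `ξ` in `ℝ²`, nonzero `x ∈ ℝ²` and `k > 0`,
`(1/(2π)) ∫_{S¹} (θ·ξ) e^{ikθ·x} dθ = i ((x/|x|)·ξ) J₁(k|x|)`. -/
theorem stmt9 (ξ x : EuclideanSpace ℝ (Fin 2)) (hξ : ‖ξ‖ = 1)
    (hx : x ≠ 0) (k : ℝ) (hk : 0 < k) :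
    (1 / (2 * Real.pi) : ℂ) *
        ∫ t in (0:ℝ)..(2 * Real.pi),
          ((⟪circ t, ξ⟫ : ℝ) : ℂ) * Complex.exp (Complex.I * (k : ℂ) * (⟪circ t, x⟫ : ℝ)) =
      Complex.I * ((⟪‖x‖⁻¹ • x, ξ⟫ : ℝ) : ℂ) * (besselJ 1 (k * ‖x‖) : ℂ) := by
  obtain ⟨φ, h0, h1⟩ := exists_polar x
  have hr : 0 < ‖x‖ := norm_pos_iff.mpr hx
  set r := ‖x‖ with hrdef
  have hz : k * r ≠ 0 := (mul_pos hk hr).ne'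
  set A : ℝ := Real.cos φ * ξ 0 + Real.sin φ * ξ 1 with hA
  set B : ℝ := Real.cos φ * ξ 1 - Real.sin φ * ξ 0 with hB
  have hAx : ⟪r⁻¹ • x, ξ⟫ = A := by
    rw [real_inner_smul_left, PiLp.inner_apply]
    simp only [Fin.sum_univ_two, RCLike.inner_apply, conj_trivial]
    rw [h0, h1]
    field_simp
    rw [hA]; ring
  set f : ℝ → ℂ := fun t =>
    ((⟪circ t, ξ⟫ : ℝ) : ℂ) * Complex.exp (Complex.I * (k : ℂ) * (⟪circ t, x⟫ : ℝ)) with hf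
  have hper : Function.Periodic f (2 * Real.pi) := by
    intro t
    simp only [hf, circ_inner, Real.cos_add_two_pi, Real.sin_add_two_pi]
  have hshift : ∀ u : ℝ, f (u + (φ - Real.pi / 2)) =
      A * ((Real.sin u : ℂ) * Complex.exp (Complex.I * (k * r : ℝ) * (Real.sin u : ℝ))) -
      B * ((Real.cos u : ℂ) * Complex.exp (Complex.I * (k * r : ℝ) * (Real.sin u : ℝ))) := by
    intro u
    have hcos : Real.cos (u + (φ - Real.pi / 2)) =
        Real.sin u * Real.cos φ + Real.cos u * Real.sin φ := by
      rw [← add_sub_assoc, Real.cos_sub_pi_div_two, Real.sin_add]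
    have hsin : Real.sin (u + (φ - Real.pi / 2)) =
        Real.sin u * Real.sin φ - Real.cos u * Real.cos φ := by
      rw [← add_sub_assoc, Real.sin_sub_pi_div_two, Real.cos_add]; ring
    have i1 : ⟪circ (u + (φ - Real.pi / 2)), ξ⟫ = A * Real.sin u - B * Real.cos u := by
      rw [circ_inner, hcos, hsin, hA, hB]; ring
    have i2 : ⟪circ (u + (φ - Real.pi / 2)), x⟫ = r * Real.sin u := by
      rw [circ_inner, hcos, hsin, h0, h1]
      linear_combination r * Real.sin u * Real.cos_sq_add_sin_sq φ
    simp only [hf, i1, i2]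
    push_cast
    ring_nf
  have hint : ∫ t in (0:ℝ)..(2 * Real.pi), f t =
      ∫ u in (-Real.pi)..Real.pi, f (u + (φ - Real.pi / 2)) := by
    rw [integral_comp_add_right]
    have h := hper.intervalIntegral_add_eq 0 (-Real.pi + (φ - Real.pi / 2))
    rw [zero_add] at h
    rw [h]
    congr 1
    ring
  rw [hint, hAx, besselJ_one hz]
  simp_rw [hshift]
  rw [integral_sub (Continuous.intervalIntegrable (by fun_prop) _ _)
    (Continuous.intervalIntegrable (by fun_prop) _ _), integral_const_mul, integral_const_mul,
    integral_cos_mul_exp hz, integral_sin_mul_exp]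
  have hpi : (Real.pi : ℂ) ≠ 0 := by exact_mod_cast Real.pi_ne_zero
  generalize ∫ u in (0:ℝ)..Real.pi, Real.sin u * Real.sin (k * r * Real.sin u) = S
  push_cast
  field_simp
  ring
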